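/- For every n ≥ 1, r ≥ 1, and every m ≥ 2, the m-th homotopy group of X_r(U(n)) is isomorphic to the m-th homotopy group of X_r(SU(n)): π_m(X_r(U(n))) ≅ π_m(X_r(SU(n))). -/

import Mathlib

/-!
The determinants of the entries of a tuple give a map `D : X_r(U(n)) → (S¹)^r`, and the inclusion
`SU(n) ⊆ U(n)` induces a map `X_r(SU(n)) → X_r(U(n))`. Every unitary matrix is a scalar times a
special unitary one and scalars act trivially by conjugation, so this map is a closed embedding
onto the fibre `D = 1` (`isEmbedding_inclVar`, `mem_range_inclVar`).

The vector group `ℝ^r` acts on `X_r(U(n))` by multiplying the `k`-th matrix with the scalar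
`exp (i v_k / n)`, and `D (v • x) = exp (i v) * D x`. A cube of dimension at least two in
`X_r(U(n))` with boundary sent to a point of the fibre `D = 1` has a logarithm `τ` of `D` which
vanishes on the boundary: the cube is simply connected, so `D` lifts along `exp : ℝ → S¹`, and the
lift is constant on the boundary because the boundary is connected. Acting by `-s • τ`,
`0 ≤ s ≤ 1`, deforms the cube into the fibre relative to its boundary. The same applies to
homotopies between such cubes, so the fibre has the same homotopy groups in degrees at least two
as the whole space (`nonempty_mulEquiv_fibre`).

Finally `U(n)` is path connected (`joined_one_unitary`), hence so is `X_r(U(n))`, and a path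
between two basepoints induces an isomorphism of homotopy groups (`nonempty_mulEquiv_of_path`).
-/

/-- The unitary group `U(n)` of `n × n` complex unitary matrices. -/
abbrev Un (n : ℕ) : Type := ↥(Matrix.unitaryGroup (Fin n) ℂ)

/-- The special unitary group `SU(n)`, as the subgroup of the unitary group `U(n)`
consisting of the unitary matrices of determinant `1`. -/
def SUsubgroup (n : ℕ) : Subgroup (Un n) :=
  MonoidHom.ker (Matrix.detMonoidHom.comp (Matrix.unitaryGroup (Fin n) ℂ).subtype)

/-- The special unitary group `SU(n)`. -/
abbrev SUn (n : ℕ) : Type := ↥(SUsubgroup n)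

/-- The character variety `X_r(U(n))`: the quotient topological space of `U(n)^r`
by the diagonal conjugation action. -/
abbrev CharVarU (n r : ℕ) : Type :=
  Quotient (MulAction.orbitRel (ConjAct (Un n)) (Fin r → Un n))

/-- The character variety `X_r(SU(n))`: the quotient topological space of `SU(n)^r`
by the diagonal conjugation action. -/
abbrev CharVarSU (n r : ℕ) : Type :=
  Quotient (MulAction.orbitRel (ConjAct (SUn n)) (Fin r → SUn n))

namespace CharVarHomotopy

open Topology Topology.Homotopy unitInterval

/-! ### Change of basepoint for homotopy groups -/

section Basepoint

variable {N X : Type*} [TopologicalSpace X]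

/-- A free homotopy from the generalized loop `f` to the generalized loop `g` which moves the whole
boundary of the cube along the path `γ`. -/
def HomotopicAlong {a b : X} (γ : Path a b) (f : Ω^ N X a) (g : Ω^ N X b) : Prop :=
  ∃ H : C(I × (N → I), X), (∀ s, H (0, s) = f s) ∧ (∀ s, H (1, s) = g s) ∧
    ∀ t, ∀ s ∈ Cube.boundary N, H (t, s) = γ t

theorem homotopic_of_map {a : X} {f g : Ω^ N X a} (K : C(I × (N → I), X))
    (h0 : ∀ s, K (0, s) = f s) (h1 : ∀ s, K (1, s) = g s)
    (hb : ∀ t, ∀ s ∈ Cube.boundary N, K (t, s) = a) : GenLoop.Homotopic f g :=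
  ⟨{ toContinuousMap := K
     map_zero_left := h0
     map_one_left := h1
     prop' := fun t s hs => (hb t s hs).trans (f.2 s hs).symm }⟩

theorem exists_map_of_homotopic {a : X} {f g : Ω^ N X a} (h : GenLoop.Homotopic f g) :
    ∃ K : C(I × (N → I), X), (∀ s, K (0, s) = f s) ∧ (∀ s, K (1, s) = g s) ∧
      ∀ t, ∀ s ∈ Cube.boundary N, K (t, s) = a := by
  obtain ⟨K⟩ := h
  refine ⟨K.toContinuousMap, K.map_zero_left, K.map_one_left, fun t s hs => ?_⟩
  exact (K.prop' t s hs).trans (f.2 s hs)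

theorem HomotopicAlong.symm {a b : X} {γ : Path a b} {f : Ω^ N X a} {g : Ω^ N X b}
    (h : HomotopicAlong γ f g) : HomotopicAlong γ.symm g f := by
  obtain ⟨H, h0, h1, hb⟩ := h
  refine ⟨H.comp ⟨fun p => (σ p.1, p.2), by fun_prop⟩, ?_, ?_, ?_⟩
  · intro s; simp [h1]
  · intro s; simp [h0]
  · intro t s hs
    simp [hb _ s hs, Path.symm]

theorem transAt_apply [DecidableEq N] {a : X} (i : N) (f g : Ω^ N X a) (s : N → I) :
    GenLoop.transAt i f g s = if (s i : ℝ) ≤ 1 / 2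
      then f (Function.update s i <| Set.projIcc 0 1 zero_le_one (2 * s i))
      else g (Function.update s i <| Set.projIcc 0 1 zero_le_one (2 * s i - 1)) := rfl

/-- Free homotopies along the same path can be concatenated in a cube coordinate: they agree on
the common face, where both follow the path. -/
theorem HomotopicAlong.transAt [DecidableEq N] {a b : X} {γ : Path a b} {f f' : Ω^ N X a}
    {g g' : Ω^ N X b} (i : N) (h : HomotopicAlong γ f g) (h' : HomotopicAlong γ f' g') :
    HomotopicAlong γ (GenLoop.transAt i f f') (GenLoop.transAt i g g') := by
  obtain ⟨H, h0, h1, hb⟩ := h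
  obtain ⟨H', h0', h1', hb'⟩ := h'
  let u : I × (N → I) → (N → I) :=
    fun p => Function.update p.2 i (Set.projIcc 0 1 zero_le_one (2 * (p.2 i : ℝ)))
  let v : I × (N → I) → (N → I) :=
    fun p => Function.update p.2 i (Set.projIcc 0 1 zero_le_one (2 * (p.2 i : ℝ) - 1))
  have hu : Continuous u := continuous_snd.update i (continuous_projIcc.comp (by fun_prop))
  have hv : Continuous v := continuous_snd.update i (continuous_projIcc.comp (by fun_prop))
  have hc : Continuous fun p : I × (N → I) =>
      if (p.2 i : ℝ) ≤ 1 / 2 then H (p.1, u p) else H' (p.1, v p) := by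
    refine Continuous.if_le (by fun_prop) (by fun_prop) (by fun_prop) (by fun_prop) ?_
    intro p hp
    rw [hb, hb']
    · exact ⟨i, Or.inl (by simp [v, hp])⟩
    · exact ⟨i, Or.inr (by simp [u, hp])⟩
  refine ⟨⟨_, hc⟩, ?_, ?_, ?_⟩
  · intro s
    rw [transAt_apply]
    simp only [ContinuousMap.coe_mk, h0, h0', u, v]
  · intro s
    rw [transAt_apply]
    simp only [ContinuousMap.coe_mk, h1, h1', u, v]
  · intro t s hs
    simp only [ContinuousMap.coe_mk]
    obtain ⟨j, hj⟩ := hs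
    by_cases hij : j = i
    · subst hij
      split_ifs with hle
      · refine hb t _ ⟨j, ?_⟩
        rcases hj with hj | hj
        · left; simp [u, hj]
        · rw [hj] at hle; norm_num at hle
      · refine hb' t _ ⟨j, ?_⟩
        rcases hj with hj | hj
        · rw [hj] at hle; norm_num at hle
        · right; simp only [v, hj, Function.update_self, Set.Icc.coe_one]; norm_num
    · split_ifs
      · exact hb t _ ⟨j, by simpa [u, hij] using hj⟩
      · exact hb' t _ ⟨j, by simpa [v, hij] using hj⟩

/-- A map between generalized loops induces an isomorphism of homotopy groups if it is bijective
up to homotopy and compatible with concatenation along one cube coordinate. -/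
theorem nonempty_mulEquiv_of_genLoop [DecidableEq N] [Nonempty N]
    {Y : Type*} [TopologicalSpace Y] {a : X} {b : Y} (T : Ω^ N X a → Ω^ N Y b)
    (hT : ∀ f f', GenLoop.Homotopic f f' → GenLoop.Homotopic (T f) (T f'))
    (hinj : ∀ f f', GenLoop.Homotopic (T f) (T f') → GenLoop.Homotopic f f')
    (hsurj : ∀ g, ∃ f, GenLoop.Homotopic (T f) g) (i : N)
    (hmul : ∀ f f', GenLoop.Homotopic (T (GenLoop.transAt i f f'))
      (GenLoop.transAt i (T f) (T f'))) :
    Nonempty (HomotopyGroup N X a ≃* HomotopyGroup N Y b) := by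
  let Φ : HomotopyGroup N X a → HomotopyGroup N Y b := Quotient.map T fun f f' h => hT f f' h
  have hΦ (p q : HomotopyGroup N X a) : Φ (p * q) = Φ p * Φ q := by
    obtain ⟨f, rfl⟩ := Quotient.exists_rep p
    obtain ⟨f', rfl⟩ := Quotient.exists_rep q
    refine (congrArg Φ (HomotopyGroup.mul_spec (i := i))).trans (Eq.trans ?_
      (HomotopyGroup.mul_spec (i := i) (p := T f) (q := T f')).symm)
    exact Quotient.sound (hmul f' f)
  refine ⟨MulEquiv.ofBijective (MonoidHom.mk' Φ hΦ) ⟨?_, ?_⟩⟩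
  · rintro ⟨f⟩ ⟨f'⟩ h
    exact Quotient.sound (hinj _ _ (Quotient.exact h))
  · rintro ⟨g⟩
    obtain ⟨f, hf⟩ := hsurj g
    exact ⟨Quotient.mk _ f, Quotient.sound hf⟩

/-- The coordinate change `[0, 1]^N → [-1, 1]^N`. -/
def center (s : N → I) : N → ℝ := fun j => 2 * (s j : ℝ) - 1

/-- The retraction of `ℝ^N` onto `[-1, 1]^N`, read in the coordinates of `[0, 1]^N`. -/
noncomputable def clamp (u : N → ℝ) : N → I := fun j => Set.projIcc 0 1 zero_le_one ((u j + 1) / 2)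

@[fun_prop]
theorem continuous_center : Continuous (center (N := N)) := by
  unfold center; fun_prop

@[fun_prop]
theorem continuous_clamp : Continuous (clamp (N := N)) :=
  continuous_pi fun j => continuous_projIcc.comp (by fun_prop)

@[simp] theorem clamp_center (s : N → I) : clamp (center s) = s := by
  ext j
  simp only [clamp, center, sub_add_cancel]
  rw [mul_div_cancel_left₀ _ two_ne_zero, Set.projIcc_val]

variable [Fintype N]

theorem clamp_mem_boundary {u : N → ℝ} (hu : 1 ≤ ‖u‖) : clamp u ∈ Cube.boundary N := by
  by_contra hc
  have : ‖u‖ < 1 := by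
    rw [pi_norm_lt_iff one_pos]
    intro j
    by_contra hj
    rw [not_lt, Real.norm_eq_abs, le_abs] at hj
    refine hc ⟨j, ?_⟩
    rcases hj with hj | hj
    · right; exact Set.projIcc_of_right_le _ (by linarith)
    · left; exact Set.projIcc_of_le_left _ (by linarith)
  linarith

theorem norm_center_le (s : N → I) : ‖center s‖ ≤ 1 := by
  rw [pi_norm_le_iff_of_nonneg zero_le_one]
  intro j
  rw [Real.norm_eq_abs, abs_le]
  have := (s j).2.1; have := (s j).2.2
  constructor <;> simp only [center] <;> linarith

theorem norm_center {s : N → I} (hs : s ∈ Cube.boundary N) : ‖center s‖ = 1 := by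
  refine le_antisymm (norm_center_le s) ?_
  obtain ⟨j, hj⟩ := hs
  refine le_trans (le_of_eq ?_) (norm_le_pi_norm (center s) j)
  rcases hj with hj | hj
  · simp [center, hj]
  · simp only [center, hj, Set.Icc.coe_one]
    norm_num

open Classical in
/-- The family of maps on `ℝ^N` given by `G` on the cube `[-1, 1]^N`, and outside of it by the
curves `c` as a function of the distance to the cube. -/
noncomputable def shell (G : C(I × (N → I), X)) (c : C(I × ℝ, X)) (p : I × (N → ℝ)) : X :=
  if ‖p.2‖ ≤ 1 then G (p.1, clamp p.2) else c (p.1, ‖p.2‖ - 1)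

variable {G : C(I × (N → I), X)} {c : C(I × ℝ, X)}

theorem continuous_shell (h : ∀ t, ∀ s ∈ Cube.boundary N, G (t, s) = c (t, 0)) :
    Continuous (shell G c) := by
  refine Continuous.if_le (by fun_prop) (by fun_prop) (by fun_prop) (by fun_prop) ?_
  intro p hp
  rw [h _ _ (clamp_mem_boundary hp.ge), hp, sub_self]

theorem shell_center (t : I) (s : N → I) : shell G c (t, center s) = G (t, s) := by
  rw [shell, if_pos (norm_center_le s), clamp_center]

theorem shell_of_one_le (h : ∀ t, ∀ s ∈ Cube.boundary N, G (t, s) = c (t, 0)) (t : I)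
    {u : N → ℝ} (hu : 1 ≤ ‖u‖) : shell G c (t, u) = c (t, ‖u‖ - 1) := by
  rw [shell]
  split_ifs with hle
  · rw [h _ _ (clamp_mem_boundary hu), le_antisymm hle hu, sub_self]
  · rfl

variable {a b : X}

/-- Transport along `γ`: `T f` is `f` on a smaller cube, surrounded by radial copies of `γ`, and the
free homotopy from `f` to `T f` zooms out from the smaller cube. The second property says that
`T f` is unique up to homotopy. -/
theorem exists_transport (γ : Path a b) : ∃ T : Ω^ N X a → Ω^ N X b,
    (∀ f, HomotopicAlong γ f (T f)) ∧
    (∀ f g, HomotopicAlong γ f g → GenLoop.Homotopic (T f) g) ∧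
    (∀ f f', GenLoop.Homotopic f f' → GenLoop.Homotopic (T f) (T f')) := by
  let G (f : Ω^ N X a) : C(I × (N → I), X) := f.1.comp ⟨Prod.snd, continuous_snd⟩
  let c : C(I × ℝ, X) := γ.extend.comp ⟨Prod.snd, continuous_snd⟩
  have hG (f : Ω^ N X a) : ∀ t, ∀ s ∈ Cube.boundary N, G f (t, s) = c (t, 0) := by
    intro t s hs
    simp only [G, c, ContinuousMap.comp_apply, ContinuousMap.coe_mk, Path.extend_zero]
    exact f.2 s hs
  have hn (x : ℝ) (hx : 0 ≤ x) (s : N → I) (hs : s ∈ Cube.boundary N) :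
      ‖x • center s‖ = x := by
    rw [norm_smul, norm_center hs, mul_one, Real.norm_of_nonneg hx]
  have hcs (f : Ω^ N X a) := continuous_shell (hG f)
  let T (f : Ω^ N X a) : Ω^ N X b :=
    ⟨⟨fun s => shell (G f) c (0, (2 : ℝ) • center s), (hcs f).comp (by fun_prop)⟩, by
      intro s hs
      have h2 := hn 2 (by norm_num) s hs
      change shell (G f) c (0, (2 : ℝ) • center s) = b
      rw [shell_of_one_le (hG f) _ (by rw [h2]; norm_num), h2]
      simp only [c, ContinuousMap.comp_apply, ContinuousMap.coe_mk]
      exact γ.extend_of_one_le (by norm_num)⟩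
  have hT (f : Ω^ N X a) (s : N → I) : T f s = shell (G f) c (0, (2 : ℝ) • center s) := rfl
  refine ⟨T, ?_, ?_, ?_⟩
  · intro f
    refine ⟨⟨fun p => shell (G f) c (0, (1 + (p.1 : ℝ)) • center p.2),
      (hcs f).comp (by fun_prop)⟩, ?_, ?_, ?_⟩
    · intro s
      simp only [ContinuousMap.coe_mk, Set.Icc.coe_zero, add_zero, one_smul, shell_center]
      rfl
    · intro s
      rw [hT]
      simp only [ContinuousMap.coe_mk, Set.Icc.coe_one]
      norm_num
    · intro t s hs
      have h2 := hn (1 + t) (by linarith [t.2.1]) s hs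
      simp only [ContinuousMap.coe_mk]
      rw [shell_of_one_le (hG f) _ (by rw [h2]; linarith [t.2.1]), h2]
      simp only [c, ContinuousMap.comp_apply, ContinuousMap.coe_mk, add_sub_cancel_left]
      exact γ.extend_extends' t
  -- At time `t` use the free homotopy at time `t`, surrounded by the rest of the path `γ`.
  · rintro f g ⟨H, h0, h1, hb⟩
    let c' : C(I × ℝ, X) := γ.extend.comp ⟨fun p => (p.1 : ℝ) + p.2, by fun_prop⟩
    have hH : ∀ t, ∀ s ∈ Cube.boundary N, H (t, s) = c' (t, 0) := by
      intro t s hs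
      rw [hb t s hs]
      simp only [c', ContinuousMap.comp_apply, ContinuousMap.coe_mk, add_zero]
      exact (γ.extend_extends' t).symm
    refine homotopic_of_map ⟨fun p => shell H c' (p.1, (2 - (p.1 : ℝ)) • center p.2),
      (continuous_shell hH).comp (by fun_prop)⟩ ?_ ?_ ?_
    · intro s
      rw [hT]
      simp only [ContinuousMap.coe_mk, Set.Icc.coe_zero, sub_zero, shell, h0]
      simp [c, c', G]
    · intro s
      have : (2 - 1 : ℝ) = 1 := by norm_num
      simp only [ContinuousMap.coe_mk, Set.Icc.coe_one, this, one_smul, shell_center, h1]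
    · intro t s hs
      have h2 := hn (2 - t) (by linarith [t.2.2]) s hs
      simp only [ContinuousMap.coe_mk]
      rw [shell_of_one_le hH _ (by rw [h2]; linarith [t.2.2]), h2]
      simp only [c', ContinuousMap.comp_apply, ContinuousMap.coe_mk]
      exact γ.extend_of_one_le (by linarith)
  · intro f f' hf
    obtain ⟨F, h0, h1, hb⟩ := exists_map_of_homotopic hf
    have hF : ∀ t, ∀ s ∈ Cube.boundary N, F (t, s) = c (t, 0) := by
      intro t s hs
      rw [hb t s hs]
      simp [c]
    refine homotopic_of_map ⟨fun p => shell F c (p.1, (2 : ℝ) • center p.2),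
      (continuous_shell hF).comp (by fun_prop)⟩ ?_ ?_ ?_
    · intro s
      rw [hT]
      simp [shell, h0, G, c]
    · intro s
      rw [hT]
      simp [shell, h1, G, c]
    · intro t s hs
      have h2 := hn 2 (by norm_num) s hs
      simp only [ContinuousMap.coe_mk]
      rw [shell_of_one_le hF _ (by rw [h2]; norm_num), h2]
      simp only [c, ContinuousMap.comp_apply, ContinuousMap.coe_mk]
      exact γ.extend_of_one_le (by norm_num)

theorem nonempty_mulEquiv_of_path [DecidableEq N] [Nonempty N] (γ : Path a b) :
    Nonempty (HomotopyGroup N X a ≃* HomotopyGroup N X b) := by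
  obtain ⟨T, hT, hT1, hT2⟩ := exists_transport (N := N) γ
  obtain ⟨S, hS, hS1, hS2⟩ := exists_transport (N := N) γ.symm
  refine nonempty_mulEquiv_of_genLoop T hT2 (fun f f' h => ?_) (fun g => ⟨S g, ?_⟩)
    (Classical.arbitrary N) (fun f f' => hT1 _ _ ((hT f).transAt _ (hT f')))
  · exact (hS1 _ _ (hT f).symm).symm.trans ((hS2 _ _ h).trans (hS1 _ _ (hT f').symm))
  · refine hT1 _ _ ?_
    have := (hS g).symm
    rwa [Path.symm_symm] at this

end Basepoint

/-! ### Fibres of a torus-valued invariant -/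

section Fibre

/-- A map to a torus from a retract of a simply connected space has a logarithm: it can be lifted
along the covering `Circle.exp` after composing with the retraction. -/
theorem exists_lift_of_retract {A E ρ : Type*} [TopologicalSpace A] [TopologicalSpace E]
    [SimplyConnectedSpace E] [LocallyPathConnectedSpace E] (j : C(A, E)) (q : C(E, A))
    (hq : ∀ x, q (j x) = x) (d : C(A, ρ → Circle)) (x₀ : A) (h₀ : d x₀ = 1) :
    ∃ τ : C(A, ρ → ℝ), τ x₀ = 0 ∧ ∀ x k, Circle.exp (τ x k) = d x k := by
  have key (k : ρ) : ∃ F : C(E, ℝ), F (j x₀) = 0 ∧ ∀ y, Circle.exp (F y) = d (q y) k := by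
    obtain ⟨F, ⟨h1, h2⟩, -⟩ := Circle.isCoveringMap_exp.existsUnique_continuousMap_lifts
      (⟨fun y => d (q y) k, by fun_prop⟩ : C(E, Circle)) (j x₀) 0 (by simp [hq, h₀])
    exact ⟨F, h1, fun y => congrFun h2 y⟩
  choose F hF0 hF using key
  refine ⟨⟨fun x k => F k (j x), by fun_prop⟩, ?_, ?_⟩
  · ext k; exact hF0 k
  · intro x k
    simp [hF, hq]

variable {N : Type*} {ρ : Type*}

theorem exists_lift_cube (d : C(N → I, ρ → Circle)) (x₀ : N → I) (h₀ : d x₀ = 1) :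
    ∃ τ : C(N → I, ρ → ℝ), τ x₀ = 0 ∧ ∀ x k, Circle.exp (τ x k) = d x k :=
  exists_lift_of_retract (E := N → ℝ) ⟨fun s k => (s k : ℝ), by fun_prop⟩
    ⟨fun u k => Set.projIcc 0 1 zero_le_one (u k),
      continuous_pi fun k => continuous_projIcc.comp (by fun_prop)⟩
    (fun s => by ext k; simp) d x₀ h₀

theorem exists_lift_cylinder (d : C(I × (N → I), ρ → Circle)) (x₀ : I × (N → I)) (h₀ : d x₀ = 1) :
    ∃ τ : C(I × (N → I), ρ → ℝ), τ x₀ = 0 ∧ ∀ x k, Circle.exp (τ x k) = d x k :=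
  exists_lift_of_retract (E := ℝ × (N → ℝ))
    ⟨fun p => ((p.1 : ℝ), fun k => (p.2 k : ℝ)), by fun_prop⟩
    ⟨fun p => (Set.projIcc 0 1 zero_le_one p.1, fun k => Set.projIcc 0 1 zero_le_one (p.2 k)),
      (continuous_projIcc.comp continuous_fst).prodMk
        (continuous_pi fun k => continuous_projIcc.comp (by fun_prop))⟩
    (fun p => by ext k <;> simp) d x₀ h₀

/-- A logarithm of a map to the torus is constant on a connected set where that map is `1`. -/
theorem lift_eqOn_zero {A : Type*} [TopologicalSpace A] (d : A → ρ → Circle) (τ : C(A, ρ → ℝ))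
    (hτ : ∀ x k, Circle.exp (τ x k) = d x k) {S : Set A} (hS : IsPreconnected S)
    (hd : ∀ x ∈ S, d x = 1) {x₀ : A} (hx₀ : x₀ ∈ S) (h₀ : τ x₀ = 0) {x : A} (hx : x ∈ S) :
    τ x = 0 := by
  ext k
  refine Circle.isCoveringMap_exp.eqOn_of_comp_eqOn (g₁ := fun y => τ y k) (g₂ := fun _ => 0)
    hS (by fun_prop) continuousOn_const ?_ hx₀ (by simp [h₀]) hx
  intro y hy
  simp [hτ, hd y hy]

variable {F X : Type*} [TopologicalSpace F] [TopologicalSpace X]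

/-- The generalized loop obtained by composing with a continuous map. -/
def pushLoop (φ : C(F, X)) {y : F} (f : Ω^ N F y) : Ω^ N X (φ y) :=
  ⟨φ.comp f.1, fun s hs => congrArg φ (f.2 s hs)⟩

theorem isPreconnected_face [DecidableEq N] (j : N) (e : I) :
    IsPreconnected {s : N → I | s j = e} := by
  have : {s : N → I | s j = e} = (fun s => Function.update s j e) '' Set.univ := by
    ext s
    constructor
    · intro hs
      exact ⟨s, trivial, by rw [← (hs : s j = e)]; simp⟩
    · rintro ⟨s, -, rfl⟩
      simp
  rw [this]
  exact isPreconnected_univ.image _ (continuous_id.update j continuous_const).continuousOn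

/-- If a torus-valued invariant `D` of `X` is equivariant for an action of `ℝ^ρ` which covers the
translations of the torus, then the inclusion of the fibre `D = 1` induces isomorphisms of the
homotopy groups of degree at least two: on a cube, a logarithm of `D` exists, and subtracting it
moves the cube into the fibre. -/
theorem nonempty_mulEquiv_fibre [Fintype N] [DecidableEq N] [Nontrivial N] (φ : C(F, X))
    (hφ : IsEmbedding φ) (D : C(X, ρ → Circle)) (hrange : ∀ x, x ∈ Set.range φ ↔ D x = 1)
    (act : C((ρ → ℝ) × X, X)) (act_zero : ∀ x, act (0, x) = x)
    (hD : ∀ v x k, D (act (v, x)) k = Circle.exp (v k) * D x k) (y : F) :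
    Nonempty (HomotopyGroup N F y ≃* HomotopyGroup N X (φ y)) := by
  have hDφ (z : F) : D (φ z) = 1 := (hrange _).1 ⟨z, rfl⟩
  -- Subtracting a logarithm of `D` gives a map to the fibre.
  have descend {A : Type _} [TopologicalSpace A] (h : C(A, X)) (τ : C(A, ρ → ℝ))
      (hτ : ∀ x k, Circle.exp (τ x k) = D (h x) k) :
      ∃ g : C(A, F), ∀ x, φ (g x) = act (-τ x, h x) := by
    have hm (x : A) : act (-τ x, h x) ∈ Set.range φ := by
      rw [hrange]
      ext1 k
      rw [hD, Pi.neg_apply, Circle.exp_neg, hτ, inv_mul_cancel, Pi.one_apply]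
    choose g hg using hm
    refine ⟨⟨g, hφ.continuous_iff.2 ?_⟩, hg⟩
    have : φ ∘ g = fun x => act (-τ x, h x) := funext hg
    rw [this]
    fun_prop
  refine nonempty_mulEquiv_of_genLoop (pushLoop φ) ?_ ?_ ?_ (Classical.arbitrary N) ?_
  · intro f f' h
    obtain ⟨K, h0, h1, hb⟩ := exists_map_of_homotopic h
    exact homotopic_of_map (φ.comp K) (fun s => congrArg φ (h0 s)) (fun s => congrArg φ (h1 s))
      (fun t s hs => congrArg φ (hb t s hs))
  · intro f f' h
    obtain ⟨H, h0, h1, hb⟩ := exists_map_of_homotopic h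
    have d0 (s) : D (H (0, s)) = 1 := by rw [h0]; exact hDφ _
    have d1 (s) : D (H (1, s)) = 1 := by rw [h1]; exact hDφ _
    have db (t s) (hs : s ∈ Cube.boundary N) : D (H (t, s)) = 1 := by rw [hb t s hs]; exact hDφ _
    obtain ⟨τ, hτ0, hτ⟩ := exists_lift_cylinder (D.comp H) (0, 0) (d0 0)
    have t0 (s) : τ (0, s) = 0 := by
      refine lift_eqOn_zero (fun x => D (H x)) τ hτ (S := (fun s => (0, s)) '' Set.univ)
        (isPreconnected_univ.image _ (by fun_prop)) ?_ ⟨0, trivial, rfl⟩ hτ0 ⟨s, trivial, rfl⟩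
      rintro _ ⟨s, -, rfl⟩
      exact d0 s
    have tb (t s) (hs : s ∈ Cube.boundary N) : τ (t, s) = 0 := by
      refine lift_eqOn_zero (fun x => D (H x)) τ hτ (S := (fun t => (t, s)) '' Set.univ)
        (isPreconnected_univ.image _ (by fun_prop)) ?_ ⟨0, trivial, rfl⟩ (t0 s) ⟨t, trivial, rfl⟩
      rintro _ ⟨t, -, rfl⟩
      exact db t s hs
    have t1 (s) : τ (1, s) = 0 := by
      refine lift_eqOn_zero (fun x => D (H x)) τ hτ (S := (fun s => (1, s)) '' Set.univ)
        (isPreconnected_univ.image _ (by fun_prop)) ?_ ⟨0, trivial, rfl⟩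
        (tb 1 0 ⟨Classical.arbitrary N, Or.inl rfl⟩) ⟨s, trivial, rfl⟩
      rintro _ ⟨s, -, rfl⟩
      exact d1 s
    obtain ⟨K, hK⟩ := descend H τ hτ
    refine homotopic_of_map K (fun s => hφ.injective ?_) (fun s => hφ.injective ?_)
      (fun t s hs => hφ.injective ?_)
    · rw [hK, t0, neg_zero, act_zero, h0]; rfl
    · rw [hK, t1, neg_zero, act_zero, h1]; rfl
    · rw [hK, tb t s hs, neg_zero, act_zero, hb t s hs]
  · intro f
    have db (s) (hs : s ∈ Cube.boundary N) : D (f s) = 1 :=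
      (congrArg D (f.2 s hs)).trans (hDφ _)
    obtain ⟨τ, hτ0, hτ⟩ := exists_lift_cube (D.comp f.1) 0 (db 0 ⟨Classical.arbitrary N, Or.inl rfl⟩)
    have face (j : N) (e : I) (he : e = 0 ∨ e = 1) (s s' : N → I) (hs : s j = e) (ht : s' j = e)
        (h0 : τ s = 0) : τ s' = 0 :=
      lift_eqOn_zero (fun x => D (f x)) τ hτ (isPreconnected_face j e)
        (fun x (hx : x j = e) => db x ⟨j, hx ▸ he⟩) hs h0 ht
    -- The face containing `s` fixes the coordinate `j`, so it meets the face where a coordinate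
    -- `k ≠ j` vanishes, and that face contains the origin.
    have tb (s) (hs : s ∈ Cube.boundary N) : τ s = 0 := by
      obtain ⟨j, hj⟩ := hs
      obtain ⟨k, hk⟩ := exists_ne j
      refine face j (s j) hj (Function.update s k 0) s (by simp [hk.symm]) rfl ?_
      exact face k 0 (Or.inl rfl) 0 _ rfl (by simp) hτ0
    obtain ⟨g, hg⟩ := descend f.1 τ hτ
    refine ⟨⟨g, fun s hs => hφ.injective ?_⟩, ?_⟩
    · rw [hg, tb s hs, neg_zero, act_zero]
      exact f.2 s hs
    · refine homotopic_of_map ⟨fun p => act (-((1 - (p.1 : ℝ)) • τ p.2), f.1 p.2), by fun_prop⟩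
        ?_ ?_ ?_
      · intro s
        simp only [ContinuousMap.coe_mk, Set.Icc.coe_zero, sub_zero, one_smul]
        exact (hg s).symm
      · intro s
        simp only [ContinuousMap.coe_mk, Set.Icc.coe_one, sub_self, zero_smul, neg_zero, act_zero]
        rfl
      · intro t s hs
        simp only [ContinuousMap.coe_mk, tb s hs, smul_zero, neg_zero, act_zero]
        exact f.2 s hs
  · intro f f'
    have : pushLoop φ (GenLoop.transAt (Classical.arbitrary N) f f') =
        GenLoop.transAt (Classical.arbitrary N) (pushLoop φ f) (pushLoop φ f') := by
      ext s
      rw [transAt_apply]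
      change φ (GenLoop.transAt _ f f' s) = _
      rw [transAt_apply]
      split_ifs <;> rfl
    rw [this]

end Fibre

/-! ### Scalars and determinants of unitary matrices -/

section Unitary

variable {n : ℕ}

/-- The scalar matrix `z • 1` as a unitary matrix. -/
def scalarU (n : ℕ) (z : Circle) : Un n :=
  ⟨(z : ℂ) • 1, by
    rw [Matrix.mem_unitaryGroup_iff, star_smul, star_one, smul_mul_smul_comm, one_mul,
      Complex.star_def, ← Circle.coe_inv_eq_conj, ← Circle.coe_mul, mul_inv_cancel, Circle.coe_one,
      one_smul]⟩

/-- The determinant of a unitary matrix, as an element of the circle. -/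
def detU (n : ℕ) : Un n →* Circle where
  toFun A := ⟨Matrix.det (A : Matrix (Fin n) (Fin n) ℂ), by
    exact mem_sphere_zero_iff_norm.2
      (CStarRing.norm_of_mem_unitary (Matrix.det_of_mem_unitary A.2))⟩
  map_one' := Circle.ext Matrix.det_one
  map_mul' A B := by exact Circle.ext (Matrix.det_mul _ _)

theorem coe_detU (A : Un n) : (detU n A : ℂ) = Matrix.det (A : Matrix (Fin n) (Fin n) ℂ) := rfl

@[fun_prop]
theorem continuous_detU : Continuous (detU n) :=
  Continuous.subtype_mk (Continuous.matrix_det continuous_subtype_val) _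

@[fun_prop]
theorem continuous_scalarU : Continuous (scalarU n) :=
  Continuous.subtype_mk (by fun_prop) _

theorem mem_SUsubgroup {A : Un n} : A ∈ SUsubgroup n ↔ detU n A = 1 := by
  rw [SUsubgroup, MonoidHom.mem_ker, Circle.ext_iff, coe_detU]
  rfl

theorem scalarU_mul_comm (z : Circle) (A : Un n) : scalarU n z * A = A * scalarU n z := by
  apply Subtype.ext
  simp [scalarU]

theorem scalarU_one : scalarU n 1 = 1 := by
  apply Subtype.ext
  simp [scalarU]

theorem detU_scalarU (z : Circle) : detU n (scalarU n z) = z ^ n := by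
  ext
  simp [coe_detU, scalarU]

/-- Conjugation by a unitary matrix is conjugation by a special unitary one, obtained by
multiplying with a scalar. -/
theorem exists_special_conj (hn : 1 ≤ n) (g : Un n) :
    ∃ h : SUn n, ∀ A : Un n, (h : Un n) * A * (h : Un n)⁻¹ = g * A * g⁻¹ := by
  obtain ⟨θ, hθ⟩ := Circle.exp_surjective (detU n g)⁻¹
  let z := Circle.exp (θ / n)
  have hz : z ^ n = (detU n g)⁻¹ := by
    rw [← hθ, ← Circle.exp_nsmul, nsmul_eq_mul, mul_div_cancel₀]
    exact_mod_cast (by lia : n ≠ 0)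
  refine ⟨⟨scalarU n z * g, ?_⟩, fun A => ?_⟩
  · rw [mem_SUsubgroup, map_mul, detU_scalarU, hz, inv_mul_cancel]
  · change scalarU n z * g * A * (scalarU n z * g)⁻¹ = g * A * g⁻¹
    rw [mul_assoc (scalarU n z), scalarU_mul_comm, mul_inv_rev, mul_assoc (g * A),
      ← mul_assoc (scalarU n z), scalarU_mul_comm, mul_inv_cancel_right]

open scoped Matrix.Norms.L2Operator in
/-- A unitary matrix `A` has finite spectrum, so `-1` is not an eigenvalue of `z • A` for some
scalar `z` of modulus one; then `z • A` is at distance less than two from the identity. -/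
theorem joined_one_unitary (A : Un n) : Joined (1 : Un n) A := by
  have hfin : (spectrum ℂ (A : Matrix (Fin n) (Fin n) ℂ)).Finite :=
    Matrix.finite_spectrum _
  have hinf : ((fun θ : ℝ => (Circle.exp θ : ℂ)) '' Set.Icc 0 1).Infinite := by
    refine (Set.Icc_infinite one_pos).image ?_
    intro x hx y hy hxy
    exact Circle.exp_injOn_Icc (by linarith [Real.pi_gt_three]) hx hy (Circle.ext hxy)
  obtain ⟨_, ⟨θ, -, rfl⟩, hθ⟩ := hinf.exists_notMem_finite hfin
  let z (t : ℝ) : Circle := Circle.exp (t * (Real.pi - θ))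
  have hz1 : (z 1 : ℂ) * Circle.exp θ = -1 := by
    rw [← Circle.coe_mul, ← Circle.exp_add, one_mul, sub_add_cancel, Circle.coe_exp,
      Complex.exp_pi_mul_I]
  have h1 : Joined (1 : Un n) (scalarU n (z 1) * A) := by
    refine Unitary.joined (A := Matrix (Fin n) (Fin n) ℂ) _ _ ?_
    refine (Unitary.norm_sub_one_lt_two_iff (scalarU n (z 1) * A).2).2 fun hmem => hθ ?_
    have hne : (z 1 : ℂ) ≠ 0 := Circle.coe_ne_zero _
    rw [← spectrum.smul_mem_smul_iff (r := Units.mk0 _ hne)]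
    convert hmem using 1
    · simp [Units.smul_def, scalarU]
    · rw [Units.smul_def, Units.val_mk0, smul_eq_mul, hz1]
  have h2 : Joined (scalarU n (z 1) * A) (scalarU n (z 0) * A) :=
    (PathConnectedSpace.joined (1 : ℝ) 0).map (f := fun t => scalarU n (z t) * A) (by fun_prop)
  have hz0 : scalarU n (z 0) * A = A := by simp [z, scalarU_one]
  rw [hz0] at h2
  exact h1.trans h2

end Unitary

/-! ### Character varieties -/

section CharVar

variable {n r : ℕ}

instance : ContinuousConstSMul (ConjAct (Un n)) (Fin r → Un n) where
  continuous_const_smul g := by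
    refine continuous_pi fun k => ?_
    simp only [Pi.smul_apply, ConjAct.smul_def]
    fun_prop

instance : ContinuousConstSMul (ConjAct (SUn n)) (Fin r → SUn n) where
  continuous_const_smul g := by
    refine continuous_pi fun k => ?_
    simp only [Pi.smul_apply, ConjAct.smul_def]
    fun_prop

/-- The class of a tuple of unitary matrices modulo simultaneous conjugation. -/
def mkU (A : Fin r → Un n) : CharVarU n r := Quotient.mk _ A

/-- The class of a tuple of special unitary matrices modulo simultaneous conjugation. -/
def mkSU (A : Fin r → SUn n) : CharVarSU n r := Quotient.mk _ A

theorem isOpenQuotientMap_mkU : IsOpenQuotientMap (mkU : (Fin r → Un n) → CharVarU n r) :=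
  MulAction.isOpenQuotientMap_quotientMk

theorem isOpenQuotientMap_mkSU : IsOpenQuotientMap (mkSU : (Fin r → SUn n) → CharVarSU n r) :=
  MulAction.isOpenQuotientMap_quotientMk

theorem mkU_eq_iff {A B : Fin r → Un n} :
    mkU A = mkU B ↔ ∃ g : Un n, ∀ k, g * B k * g⁻¹ = A k := by
  rw [mkU, mkU, Quotient.eq, MulAction.orbitRel_apply, MulAction.mem_orbit_iff]
  exact ⟨fun ⟨g, hg⟩ => ⟨ConjAct.ofConjAct g, fun k => congrFun hg k⟩,
    fun ⟨g, hg⟩ => ⟨ConjAct.toConjAct g, funext hg⟩⟩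

theorem mkSU_eq_iff {A B : Fin r → SUn n} :
    mkSU A = mkSU B ↔ ∃ g : SUn n, ∀ k, g * B k * g⁻¹ = A k := by
  rw [mkSU, mkSU, Quotient.eq, MulAction.orbitRel_apply, MulAction.mem_orbit_iff]
  exact ⟨fun ⟨g, hg⟩ => ⟨ConjAct.ofConjAct g, fun k => congrFun hg k⟩,
    fun ⟨g, hg⟩ => ⟨ConjAct.toConjAct g, funext hg⟩⟩

/-- The map `X_r(SU(n)) → X_r(U(n))` induced by the inclusion `SU(n) → U(n)`. -/
def inclVar (n r : ℕ) : C(CharVarSU n r, CharVarU n r) where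
  toFun := Quotient.lift (fun A => mkU fun k => (A k : Un n)) fun A B h => by
    obtain ⟨g, hg⟩ := mkSU_eq_iff.1 (Quotient.sound h)
    exact mkU_eq_iff.2 ⟨g, fun k => congrArg Subtype.val (hg k)⟩
  continuous_toFun := Continuous.quotient_lift
    (isOpenQuotientMap_mkU.continuous.comp (by fun_prop)) _

theorem inclVar_mkSU (A : Fin r → SUn n) :
    inclVar n r (mkSU A) = mkU fun k => (A k : Un n) := rfl

/-- The inclusion of `SU(n)^r` in `U(n)^r` is a closed embedding, and a `U(n)`-orbit meeting
`SU(n)^r` is a single `SU(n)`-orbit; so the induced map of quotients is a closed embedding. -/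
theorem isEmbedding_inclVar (hn : 1 ≤ n) : IsEmbedding (inclVar n r) := by
  have hinj : Function.Injective (inclVar n r) := by
    intro a b hab
    obtain ⟨A, rfl⟩ := isOpenQuotientMap_mkSU.surjective a
    obtain ⟨B, rfl⟩ := isOpenQuotientMap_mkSU.surjective b
    obtain ⟨g, hg⟩ := mkU_eq_iff.1 hab
    obtain ⟨h, hh⟩ := exists_special_conj hn g
    exact mkSU_eq_iff.2 ⟨h, fun k => Subtype.ext ((hh _).trans (hg k))⟩
  have hSU : IsClosed (SUsubgroup n : Set (Un n)) := by
    have : (SUsubgroup n : Set (Un n)) = detU n ⁻¹' {1} := by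
      ext A
      exact mem_SUsubgroup
    rw [this]
    exact isClosed_singleton.preimage continuous_detU
  have hj : IsClosedEmbedding fun (A : Fin r → SUn n) k => (A k : Un n) := by
    refine ⟨IsEmbedding.piMap fun _ => IsEmbedding.subtypeVal, ?_⟩
    have : Set.range (fun (A : Fin r → SUn n) k => (A k : Un n)) =
        Set.univ.pi fun _ => (SUsubgroup n : Set (Un n)) := by
      ext B
      refine ⟨?_, fun h => ⟨fun k => ⟨B k, h k trivial⟩, rfl⟩⟩
      rintro ⟨A, rfl⟩ k -
      exact (A k).2
    rw [this]
    exact isClosed_set_pi fun _ _ => hSU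
  refine (IsClosedEmbedding.of_continuous_injective_isClosedMap (inclVar n r).continuous hinj
    fun C hC => ?_).isEmbedding
  rw [← isOpenQuotientMap_mkU.isQuotientMap.isClosed_preimage]
  convert hj.isClosedMap _ (hC.preimage isOpenQuotientMap_mkSU.continuous) using 1
  ext B
  constructor
  · rintro ⟨c, hc, hcB⟩
    obtain ⟨A, rfl⟩ := isOpenQuotientMap_mkSU.surjective c
    obtain ⟨g, hg⟩ := mkU_eq_iff.1 hcB.symm
    obtain ⟨h, hh⟩ := exists_special_conj hn g
    refine ⟨fun k => h * A k * h⁻¹, ?_, funext fun k => (hh _).trans (hg k)⟩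
    have : mkSU (fun k => h * A k * h⁻¹) = mkSU A := mkSU_eq_iff.2 ⟨h, fun k => rfl⟩
    rw [Set.mem_preimage, this]
    exact hc
  · rintro ⟨A, hA, rfl⟩
    exact ⟨mkSU A, hA, rfl⟩

/-- The tuple of determinants of a point of `X_r(U(n))`. -/
noncomputable def detVar (n r : ℕ) : C(CharVarU n r, Fin r → Circle) where
  toFun := Quotient.lift (fun A k => detU n (A k)) fun A B h => by
    obtain ⟨g, hg⟩ := mkU_eq_iff.1 (Quotient.sound h)
    funext k
    simp [← hg k, mul_comm (detU n g)]
  continuous_toFun := Continuous.quotient_lift (by fun_prop) _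

theorem detVar_mkU (A : Fin r → Un n) : detVar n r (mkU A) = fun k => detU n (A k) := rfl

theorem mem_range_inclVar (x : CharVarU n r) :
    x ∈ Set.range (inclVar n r) ↔ detVar n r x = 1 := by
  constructor
  · rintro ⟨a, rfl⟩
    obtain ⟨A, rfl⟩ := isOpenQuotientMap_mkSU.surjective a
    rw [inclVar_mkSU, detVar_mkU]
    exact funext fun k => mem_SUsubgroup.1 (A k).2
  · obtain ⟨B, rfl⟩ := isOpenQuotientMap_mkU.surjective x
    intro h
    exact ⟨mkSU fun k => ⟨B k, mem_SUsubgroup.2 (congrFun h k)⟩, rfl⟩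

/-- The action of `ℝ^r` on `X_r(U(n))` multiplying the `k`-th matrix by the scalar
`exp (i v_k / n)`, so that its determinant is multiplied by `exp (i v_k)`. -/
noncomputable def scalarAct (n r : ℕ) : C((Fin r → ℝ) × CharVarU n r, CharVarU n r) where
  toFun p := Quotient.lift
    (fun B => mkU fun k => scalarU n (Circle.exp (p.1 k / n)) * B k)
    (fun A B h => by
      obtain ⟨g, hg⟩ := mkU_eq_iff.1 (Quotient.sound h)
      refine mkU_eq_iff.2 ⟨g, fun k => ?_⟩
      rw [← hg k, ← mul_assoc g, ← scalarU_mul_comm _ g]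
      simp only [mul_assoc]) p.2
  continuous_toFun := by
    refine (IsOpenQuotientMap.id.prodMap isOpenQuotientMap_mkU).continuous_comp_iff.1 ?_
    refine isOpenQuotientMap_mkU.continuous.comp
      (f := fun p : (Fin r → ℝ) × (Fin r → Un n) => fun k =>
        scalarU n (Circle.exp (p.1 k / n)) * p.2 k) ?_
    fun_prop

theorem scalarAct_mkU (v : Fin r → ℝ) (B : Fin r → Un n) :
    scalarAct n r (v, mkU B) = mkU fun k => scalarU n (Circle.exp (v k / n)) * B k := rfl

theorem joined_charVarU (x y : CharVarU n r) : Joined x y := by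
  have key : ∀ B : Fin r → Un n, Joined (mkU (fun _ => 1)) (mkU B) := by
    intro B
    exact Joined.map (f := mkU) ⟨Path.pi fun k => (joined_one_unitary (B k)).somePath⟩
      isOpenQuotientMap_mkU.continuous
  obtain ⟨A, rfl⟩ := isOpenQuotientMap_mkU.surjective x
  obtain ⟨B, rfl⟩ := isOpenQuotientMap_mkU.surjective y
  exact (key A).symm.trans (key B)

end CharVar

end CharVarHomotopy

/-- For every `n ≥ 1`, `r ≥ 1` and every `m ≥ 2` (written as `m + 2` with `m : ℕ`),
the `m`-th homotopy group of `X_r(U(n))` is isomorphic to the `m`-th homotopy group of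
`X_r(SU(n))` (both spaces are path connected, so this holds at every choice of basepoints). -/
theorem pi_charVar_unitary_iso_specialUnitary (n r : ℕ) (hn : 1 ≤ n) (hr : 1 ≤ r) (m : ℕ)
    (x : CharVarU n r) (y : CharVarSU n r) :
    Nonempty (HomotopyGroup (Fin (m + 2)) (CharVarU n r) x ≃*
      HomotopyGroup (Fin (m + 2)) (CharVarSU n r) y) := by
  open CharVarHomotopy in
  obtain ⟨e⟩ := nonempty_mulEquiv_of_path (N := Fin (m + 2))
    (joined_charVarU x (inclVar n r y)).somePath
  obtain ⟨e'⟩ := nonempty_mulEquiv_fibre (N := Fin (m + 2)) (inclVar n r)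
    (isEmbedding_inclVar hn) (detVar n r) mem_range_inclVar (scalarAct n r)
    (fun x => by
      obtain ⟨B, rfl⟩ := isOpenQuotientMap_mkU.surjective x
      simp [scalarAct_mkU, scalarU_one])
    (fun v x k => by
      obtain ⟨B, rfl⟩ := isOpenQuotientMap_mkU.surjective x
      have hn' : (n : ℝ) ≠ 0 := by exact_mod_cast (by lia : n ≠ 0)
      rw [scalarAct_mkU, detVar_mkU, detVar_mkU]
      simp only [map_mul, detU_scalarU, ← Circle.exp_nsmul, nsmul_eq_mul, mul_div_cancel₀ _ hn'])
    y
  exact ⟨e.trans e'.symm⟩
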